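/- arXiv:2209.11339 — 2 statements merged into one kernel-verified Lean document; each statement's English description precedes it below -/
import Mathlib

section
/- Let X be a topological space and G a family of open subsets of X that is a subbasis for its topology, let i : X → (G → Prop) be the map i x g = (x ∈ g), and let q̄ : Opens (G → Prop) → Opens X be the map U ↦ i⁻¹(U). If q̄ has a continuous section s : Opens X → Opens (G → Prop) (i.e. s is continuous for the Scott topologies on both sides and q̄ ∘ s = id), then the evaluation map ev : Opens X × X → Prop, (U, x) ↦ (x ∈ U), is continuous when Opens X carries the Scott topology; moreover ev equals the composite of s × id with the map (V, x) ↦ (i x ∈ V). -/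
/-!
A compact subset `K` of `Y` gives a Scott-open family `{W : Opens Y | K ⊆ W}`, so in a locally
compact space `y ∈ W` persists on the neighbourhood `{W | K ⊆ W} ×ˢ K` for some compact
neighbourhood `K` of `y`: evaluation is continuous. By Tychonoff's theorem this applies to `Σ^G`.
A continuous section `s` of the preimage map of `f : X → Y` writes the evaluation of `X` as that of
`Y` composed with `s × f`.
-/

open TopologicalSpace

/-- A subset of a complete lattice is Scott-open if it is an upper set and every nonempty
directed set whose supremum lies in it meets it. -/
def ScottOpen {α : Type*} [CompleteLattice α] (U : Set α) : Prop :=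
  IsUpperSet U ∧
    ∀ d : Set α, d.Nonempty → DirectedOn (· ≤ ·) d → sSup d ∈ U → (d ∩ U).Nonempty

/-- The Scott topology on a complete lattice. -/
def scottTopology (α : Type*) [CompleteLattice α] : TopologicalSpace α where
  IsOpen := ScottOpen
  isOpen_univ := ⟨isUpperSet_univ, fun d hd _ _ => by simpa using hd⟩
  isOpen_inter := by
    rintro U V ⟨hU, hU'⟩ ⟨hV, hV'⟩
    refine ⟨hU.inter hV, fun d hd hdir hsup => ?_⟩
    obtain ⟨a, ha, haU⟩ := hU' d hd hdir hsup.1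
    obtain ⟨b, hb, hbV⟩ := hV' d hd hdir hsup.2
    obtain ⟨c, hc, hac, hbc⟩ := hdir a ha b hb
    exact ⟨c, hc, hU hac haU, hV hbc hbV⟩
  isOpen_sUnion := by
    intro S hS
    refine ⟨isUpperSet_sUnion fun s hs => (hS s hs).1, fun d hd hdir hsup => ?_⟩
    obtain ⟨U, hU, hmem⟩ := hsup
    obtain ⟨a, ha, haU⟩ := (hS U hU).2 d hd hdir hmem
    exact ⟨a, ha, U, hU, haU⟩

/-- The canonical map from a space into `Σ^G` for a family `G` of subsets. -/
def iMap {X : Type*} (G : Set (Set X)) : X → (↥G → Prop) := fun x g => x ∈ (g : Set X)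

open scoped Topology

theorem scottOpen_setOf_subset_of_isCompact {Y : Type*} [TopologicalSpace Y] {K : Set Y}
    (hK : IsCompact K) : ScottOpen {W : Opens Y | K ⊆ W} := by
  refine ⟨fun U V hUV hKU => Set.Subset.trans hKU hUV, fun d hd hdir hKd => ?_⟩
  have : Nonempty d := hd.to_subtype
  have hcover : K ⊆ ⋃ W : d, (W : Opens Y) := by
    simpa only [Set.mem_ofPred_eq, Opens.coe_sSup, Set.biUnion_eq_iUnion] using hKd
  obtain ⟨W, hKW⟩ := hK.elim_directed_cover _ (fun W : d => (W : Opens Y).isOpen) hcover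
    hdir.directed_val
  exact ⟨W, W.2, hKW⟩

theorem continuous_eval_opens_of_locallyCompactSpace (Y : Type*) [TopologicalSpace Y]
    [LocallyCompactSpace Y] :
    letI : TopologicalSpace (Opens Y) := scottTopology (Opens Y)
    Continuous (fun p : Opens Y × Y => p.2 ∈ p.1) := by
  let _ : TopologicalSpace (Opens Y) := scottTopology (Opens Y)
  refine continuous_Prop.2 (isOpen_iff_mem_nhds.2 ?_)
  rintro ⟨V, y⟩ hy
  obtain ⟨K, hKy, hKV, hK⟩ := local_compact_nhds (V.isOpen.mem_nhds hy)
  have hKopen : IsOpen {W : Opens Y | K ⊆ W} := scottOpen_setOf_subset_of_isCompact hK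
  filter_upwards [prod_mem_nhds (hKopen.mem_nhds hKV) hKy] with p hp using hp.1 hp.2

theorem continuous_eval_of_section_general {X Y : Type*} [TopologicalSpace X] [TopologicalSpace Y]
    (f : C(X, Y))
    (hY : letI : TopologicalSpace (Opens Y) := scottTopology (Opens Y)
      Continuous (fun p : Opens Y × Y => p.2 ∈ p.1))
    (s : Opens X → Opens Y)
    (hs : Continuous[scottTopology (Opens X), scottTopology (Opens Y)] s)
    (hsec : ∀ U : Opens X, Opens.comap f (s U) = U) :
    letI : TopologicalSpace (Opens X) := scottTopology (Opens X)
    Continuous (fun p : Opens X × X => p.2 ∈ p.1) ∧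
      ∀ (U : Opens X) (x : X), x ∈ U ↔ f x ∈ s U := by
  let _ : TopologicalSpace (Opens X) := scottTopology (Opens X)
  let _ : TopologicalSpace (Opens Y) := scottTopology (Opens Y)
  have mem_iff (U : Opens X) (x : X) : x ∈ U ↔ f x ∈ s U := (SetLike.ext_iff.1 (hsec U) x).symm
  have hcomp : Continuous fun p : Opens X × X => f p.2 ∈ s p.1 :=
    hY.comp (hs.prodMap f.continuous)
  exact ⟨hcomp.congr fun p => propext (mem_iff p.1 p.2).symm, mem_iff⟩

/-- If the machine-space quotient `q̄ = Opens.comap i` has a continuous section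
`s`, then the evaluation map of `Opens X` (Scott topology) is continuous, and the evaluation
equals the composite of `s × id` with `(V, x) ↦ (i x ∈ V)`. -/
theorem continuous_eval_of_section {X : Type*} [tX : TopologicalSpace X]
    (G : Set (Set X)) (hG : tX = TopologicalSpace.generateFrom G)
    (hi : Continuous (iMap G))
    (s : Opens X → Opens (↥G → Prop))
    (hs : letI : TopologicalSpace (Opens X) := scottTopology (Opens X)
      letI : TopologicalSpace (Opens (↥G → Prop)) := scottTopology (Opens (↥G → Prop))
      Continuous s)
    (hsec : ∀ U : Opens X, Opens.comap ⟨iMap G, hi⟩ (s U) = U) :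
    letI : TopologicalSpace (Opens X) := scottTopology (Opens X)
    Continuous (fun p : Opens X × X => p.2 ∈ p.1) ∧
      ∀ (U : Opens X) (x : X), (x ∈ U) ↔ iMap G x ∈ s U :=
  continuous_eval_of_section_general ⟨iMap G, hi⟩
    (continuous_eval_opens_of_locallyCompactSpace (↥G → Prop)) s hs hsec
end

section
/- Let L be a frame and G a type, and let FF denote the free frame on G, realized as the complete lattice of lower sets of Finset G ordered by reverse inclusion (equivalently, of upper sets of Finset G under inclusion). Equip both L and FF with their Scott topologies. Suppose there exists a frame homomorphism e* : Opens(L, Scott) → Opens(FF, Scott) between the frames of Scott-open sets, together with a map r : Opens(FF, Scott) → Opens(L, Scott) preserving arbitrary suprema (unions) such that r ∘ e* = id (i.e. there is a semi-open quotient from machine space Σ^{Σ^G} onto O X with the Scott topology). Then L is a continuous lattice: every a ∈ L satisfies a = sSup {b | b ≪ a}, where b ≪ a means every nonempty directed set D with a ≤ sSup D contains some d with b ≤ d. (That is, the locale X with O X = L is locally compact.) -/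
open TopologicalSpace

/-- The way-below relation on a complete lattice. -/
def WayBelow {α : Type*} [CompleteLattice α] (b a : α) : Prop :=
  ∀ d : Set α, d.Nonempty → DirectedOn (· ≤ ·) d → a ≤ sSup d → ∃ c ∈ d, b ≤ c

/-!
A complete lattice is continuous exactly when its lattice of Scott-open sets is completely
distributive, which by Raney means that every element is the supremum of those totally below it.
Unlike continuity itself, this condition visibly passes to retracts along suprema-preserving maps:
if `r ∘ e = id`, then `r` sends elements totally below `e u` to elements totally below `u`.
Machine space is the Scott space of a lattice of lower sets, which is continuous because the
principal lower sets contained in a lower set are totally below it and have it as their union.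
-/

section CompleteLattice

attribute [local instance] scottTopology

variable {α : Type*} [CompleteLattice α] {a b c : α}

/-- The totally-below relation on a complete lattice: the analogue of `WayBelow` in which arbitrary
families replace nonempty directed ones. -/
def TotallyBelow (b a : α) : Prop :=
  ∀ s : Set α, a ≤ sSup s → ∃ c ∈ s, b ≤ c

variable (α) in
/-- A continuous lattice: every element is the supremum of the elements way below it. -/
def IsContinuousLattice : Prop :=
  ∀ a : α, a = sSup {b : α | WayBelow b a}

variable (α) in
/-- A supercontinuous lattice: every element is the supremum of the elements totally below it. By
Raney's theorem this is complete distributivity, encoded so as to pass easily to retracts. -/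
def IsSupercontinuousLattice : Prop :=
  ∀ a : α, a = sSup {b : α | TotallyBelow b a}

variable (α) in
/-- The frame of Scott-open sets of a complete lattice. -/
abbrev ScottOpens : Type _ :=
  @Opens α (scottTopology α)

theorem TotallyBelow.wayBelow (h : TotallyBelow b a) : WayBelow b a :=
  fun d _ _ had => h d had

theorem WayBelow.le (h : WayBelow b a) : b ≤ a := by
  simpa using h {a} (Set.singleton_nonempty a) (directedOn_singleton a) sSup_singleton.ge

theorem WayBelow.trans_le (hba : WayBelow b a) (hac : a ≤ c) : WayBelow b c :=
  fun d hd hdir hcd => hba d hd hdir (hac.trans hcd)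

theorem WayBelow.of_le (hba : WayBelow b a) (hcb : c ≤ b) : WayBelow c a :=
  fun d hd hdir had => (hba d hd hdir had).imp fun _ hx => ⟨hx.1, hcb.trans hx.2⟩

theorem bot_wayBelow (a : α) : WayBelow ⊥ a :=
  fun _ hd _ _ => hd.imp fun _ hc => ⟨hc, bot_le⟩

theorem WayBelow.sup (hb : WayBelow b a) (hc : WayBelow c a) : WayBelow (b ⊔ c) a := by
  intro d hd hdir had
  obtain ⟨x, hx, hbx⟩ := hb d hd hdir had
  obtain ⟨y, hy, hcy⟩ := hc d hd hdir had
  obtain ⟨z, hz, hxz, hyz⟩ := hdir x hx y hy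
  exact ⟨z, hz, sup_le (hbx.trans hxz) (hcy.trans hyz)⟩

theorem nonempty_setOf_wayBelow (a : α) : {b : α | WayBelow b a}.Nonempty :=
  ⟨⊥, bot_wayBelow a⟩

theorem directedOn_setOf_wayBelow (a : α) : DirectedOn (· ≤ ·) {b : α | WayBelow b a} :=
  fun b hb c hc => ⟨b ⊔ c, hb.sup hc, le_sup_left, le_sup_right⟩

theorem isContinuousLattice_iff_le : IsContinuousLattice α ↔
    ∀ a : α, a ≤ sSup {b : α | WayBelow b a} :=
  forall_congr' fun _ => ⟨Eq.le, fun h => h.antisymm (sSup_le fun _ => WayBelow.le)⟩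

theorem isSupercontinuousLattice_iff_le : IsSupercontinuousLattice α ↔
    ∀ a : α, a ≤ sSup {b : α | TotallyBelow b a} :=
  forall_congr' fun _ => ⟨Eq.le, fun h => h.antisymm (sSup_le fun _ hb => hb.wayBelow.le)⟩

theorem IsSupercontinuousLattice.isContinuousLattice (h : IsSupercontinuousLattice α) :
    IsContinuousLattice α :=
  isContinuousLattice_iff_le.2 fun a =>
    (h a).trans_le (sSup_le_sSup fun _ => TotallyBelow.wayBelow)

theorem IsContinuousLattice.exists_wayBelow_wayBelow (h : IsContinuousLattice α)
    (hba : WayBelow b a) : ∃ c, WayBelow b c ∧ WayBelow c a := by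
  let d : Set α := {x | ∃ y, WayBelow x y ∧ WayBelow y a}
  have hd : d.Nonempty := ⟨⊥, ⊥, bot_wayBelow ⊥, bot_wayBelow a⟩
  have hdir : DirectedOn (· ≤ ·) d := by
    rintro x ⟨x', hxx', hx'a⟩ y ⟨y', hyy', hy'a⟩
    have hsup : WayBelow (x ⊔ y) (x' ⊔ y') :=
      (hxx'.trans_le le_sup_left).sup (hyy'.trans_le le_sup_right)
    exact ⟨x ⊔ y, ⟨x' ⊔ y', hsup, hx'a.sup hy'a⟩, le_sup_left, le_sup_right⟩
  have had : a ≤ sSup d := calc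
    a = sSup {y | WayBelow y a} := h a
    _ ≤ sSup d := sSup_le fun y hya =>
      (h y).trans_le (sSup_le_sSup fun _ hxy => ⟨y, hxy, hya⟩)
  obtain ⟨x, ⟨y, hxy, hya⟩, hbx⟩ := hba d hd hdir had
  exact ⟨y, hxy.of_le hbx, hya⟩

theorem IsContinuousLattice.scottOpen_setOf_wayBelow (h : IsContinuousLattice α) (b : α) :
    ScottOpen {a : α | WayBelow b a} := by
  refine ⟨fun _ _ hac hba => hba.trans_le hac, fun d hd hdir hbd => ?_⟩
  obtain ⟨c, hbc, hcd⟩ := h.exists_wayBelow_wayBelow hbd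
  obtain ⟨a, ha, hca⟩ := hcd d hd hdir le_rfl
  exact ⟨a, ha, hbc.trans_le hca⟩

theorem IsContinuousLattice.exists_wayBelow_mem (h : IsContinuousLattice α) {U : Set α}
    (hU : ScottOpen U) (ha : a ∈ U) : ∃ b ∈ U, WayBelow b a := by
  obtain ⟨b, hba, hbU⟩ :=
    hU.2 _ (nonempty_setOf_wayBelow a) (directedOn_setOf_wayBelow a) (h a ▸ ha)
  exact ⟨b, hbU, hba⟩

theorem IsContinuousLattice.isSupercontinuousLattice_scottOpens (h : IsContinuousLattice α) :
    IsSupercontinuousLattice (ScottOpens α) := by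
  refine isSupercontinuousLattice_iff_le.2 fun U a ha => ?_
  obtain ⟨b, hbU, hba⟩ := h.exists_wayBelow_mem U.2 ha
  let W : ScottOpens α := ⟨{c | WayBelow b c}, h.scottOpen_setOf_wayBelow b⟩
  have hWU : TotallyBelow W U := by
    intro S hUS
    obtain ⟨V, hVS, hbV⟩ := Opens.mem_sSup.1 (hUS hbU)
    exact ⟨V, hVS, fun c hbc => V.2.1 hbc.le hbV⟩
  exact Opens.mem_sSup.2 ⟨W, hWU, hba⟩

theorem scottOpen_compl_Iic (a : α) : ScottOpen (Set.Iic a)ᶜ := by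
  refine ⟨(isLowerSet_Iic a).compl, fun d _ _ hd => ?_⟩
  simpa [Set.Nonempty] using hd

theorem ScottOpen.wayBelow {U : Set α} (hU : ScottOpen U) (ha : a ∈ U)
    (hb : b ∈ lowerBounds U) : WayBelow b a := by
  intro d hd hdir had
  obtain ⟨c, hcd, hcU⟩ := hU.2 d hd hdir (hU.1 had ha)
  exact ⟨c, hcd, hb hcU⟩

theorem TotallyBelow.exists_mem_lowerBounds {W U : ScottOpens α} (h : TotallyBelow W U) :
    ∃ b ∈ U, b ∈ lowerBounds (W : Set α) := by
  by_contra! hU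
  -- Otherwise the complements of `Set.Iic w` with `w ∈ W` cover `U`, but none of them contains `W`.
  let complIic (w : α) : ScottOpens α := ⟨(Set.Iic w)ᶜ, scottOpen_compl_Iic w⟩
  have hcover : U ≤ sSup (complIic '' W) := by
    intro b hb
    obtain ⟨w, hw, hbw⟩ : ∃ w ∈ W, ¬ b ≤ w := by simpa [lowerBounds] using hU b hb
    exact Opens.mem_sSup.2 ⟨complIic w, Set.mem_image_of_mem _ hw, hbw⟩
  obtain ⟨_, ⟨w, hw, rfl⟩, hWw⟩ := h _ hcover
  exact hWw hw le_rfl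

theorem isContinuousLattice_of_isSupercontinuousLattice_scottOpens
    (h : IsSupercontinuousLattice (ScottOpens α)) : IsContinuousLattice α := by
  refine isContinuousLattice_iff_le.2 fun a => ?_
  by_contra ha
  let U : ScottOpens α := ⟨(Set.Iic (sSup {b | WayBelow b a}))ᶜ, scottOpen_compl_Iic _⟩
  have haU : a ∈ sSup {W | TotallyBelow W U} := h U ▸ ha
  obtain ⟨W, hWU, haW⟩ := Opens.mem_sSup.1 haU
  obtain ⟨b, hbU, hbW⟩ := hWU.exists_mem_lowerBounds
  exact hbU (le_sSup (ScottOpen.wayBelow W.2 haW hbW))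

end CompleteLattice

theorem IsSupercontinuousLattice.of_retract {α β : Type*} [CompleteLattice α] [CompleteLattice β]
    (h : IsSupercontinuousLattice β) (e : sSupHom α β) (r : sSupHom β α)
    (hre : Function.LeftInverse r e) : IsSupercontinuousLattice α := by
  have map_totallyBelow {a : α} {b : β} (hb : TotallyBelow b (e a)) : TotallyBelow (r b) a := by
    intro s has
    have hes : e a ≤ sSup (e '' s) := (OrderHomClass.mono e has).trans_eq (map_sSup e s)
    obtain ⟨_, ⟨c, hc, rfl⟩, hbc⟩ := hb _ hes
    exact ⟨c, hc, (OrderHomClass.mono r hbc).trans_eq (hre c)⟩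
  refine isSupercontinuousLattice_iff_le.2 fun a => ?_
  calc
    a = r (e a) := (hre a).symm
    _ = r (sSup {b | TotallyBelow b (e a)}) := congrArg r (h (e a))
    _ = sSup (r '' {b | TotallyBelow b (e a)}) := map_sSup r _
    _ ≤ sSup {b | TotallyBelow b a} :=
      sSup_le_sSup (Set.image_subset_iff.2 fun _ => map_totallyBelow)

theorem isSupercontinuousLattice_lowerSet (P : Type*) [Preorder P] :
    IsSupercontinuousLattice (LowerSet P) := by
  refine isSupercontinuousLattice_iff_le.2 fun A p hp => ?_
  have hpA : TotallyBelow (LowerSet.Iic p) A := by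
    intro S hAS
    obtain ⟨B, hBS, hpB⟩ := LowerSet.mem_sSup_iff.1 (hAS hp)
    exact ⟨B, hBS, LowerSet.Iic_le.2 hpB⟩
  exact LowerSet.mem_sSup_iff.2 ⟨LowerSet.Iic p, hpA, le_rfl⟩

theorem continuous_lattice_of_semi_open_quotient_general {L M : Type*} [CompleteLattice L]
    [CompleteLattice M] (hM : IsContinuousLattice M) (e : sSupHom (ScottOpens L) (ScottOpens M))
    (r : sSupHom (ScottOpens M) (ScottOpens L)) (hre : Function.LeftInverse r e) :
    IsContinuousLattice L :=
  isContinuousLattice_of_isSupercontinuousLattice_scottOpens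
    (hM.isSupercontinuousLattice_scottOpens.of_retract e r hre)

/-- If there is a semi-open quotient from machine space `Σ^{Σ^G}` (the Scott
topology on the free frame on `G`, realized as upper sets of `Finset G` under inclusion)
onto `Opens (L, Scott)` — i.e. a frame homomorphism `e*` with a suprema-preserving
retraction `r` — then the frame `L` is a continuous lattice. -/
theorem continuous_lattice_of_semi_open_quotient {L : Type*} [Order.Frame L] (G : Type*) :
    letI : TopologicalSpace L := scottTopology L
    letI : TopologicalSpace (LowerSet (Finset G)ᵒᵈ) := scottTopology (LowerSet (Finset G)ᵒᵈ)
    (∃ (estar : FrameHom (Opens L) (Opens (LowerSet (Finset G)ᵒᵈ)))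
        (r : sSupHom (Opens (LowerSet (Finset G)ᵒᵈ)) (Opens L)),
        ∀ U : Opens L, r (estar U) = U) →
      ∀ a : L, a = sSup {b : L | WayBelow b a} := by
  rintro ⟨estar, r, hr⟩
  exact continuous_lattice_of_semi_open_quotient_general
    (isSupercontinuousLattice_lowerSet _).isContinuousLattice estar r fun U => hr U
end
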